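/- arXiv:math/0507140 — 2 statements merged into one kernel-verified Lean document; each statement's English description precedes it below -/
import Mathlib

section
/- Ext_ℤ(ℤ[1/p], ℤ) ≅ ℤ_p / ℤ viewed as abelian groups, and Hom_ℤ(ℤ[1/p], ℤ) = 0, where ℤ[1/p] is the localization of ℤ away from p. -/
open CategoryTheory

/-!
For `r : R`, the sequence `0 → R[X] → R[X] → R[1/r] → 0` given by multiplication by `r X - 1` is a
projective resolution, so `Hom(R[1/r], M)` and `Ext¹(R[1/r], M)` are the kernel and the cokernel of
the map `a ↦ (r aₙ₊₁ - aₙ)ₙ` on sequences in `M`. This map is bijective on sequences in an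
`r`-adically complete module `N`: the equation `r xₙ₊₁ - xₙ = bₙ` is solved by `xₙ = -∑ⱼ rʲ bₙ₊ⱼ`.
If `M` embeds in such an `N` and `r` acts bijectively on `Q = N / M`, the kernel on `M` is zero, and
sending `b` to the class of `x₀` in `Q` identifies the cokernel on `M` with `Q`. Finally `ℤ_p` is
`p`-adically complete and `p` acts bijectively on `ℤ_p / ℤ`.
-/

section TwoTermResolution

open Limits HomologicalComplex

universe w v u

section Complex

variable {C : Type u} [Category.{v} C] [HasZeroMorphisms C] [HasZeroObject C]
  {X₁ X₀ : C} (f : X₁ ⟶ X₀)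

/-- The chain complex `X₁ ⟶ X₀` with `X₀` in degree `0`. -/
noncomputable abbrev twoTermComplex : ChainComplex C ℕ :=
  double f (c := ComplexShape.down ℕ) (i₀ := 1) (i₁ := 0) rfl

/-- The identification of the degree `0` term of `X₁ ⟶ X₀` with `X₀`. -/
noncomputable abbrev twoTermXZeroIso : (twoTermComplex f).X 0 ≅ X₀ :=
  doubleXIso₁ f _ one_ne_zero

/-- The identification of the degree `1` term of `X₁ ⟶ X₀` with `X₁`. -/
noncomputable abbrev twoTermXOneIso : (twoTermComplex f).X 1 ≅ X₁ :=
  doubleXIso₀ f _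

lemma twoTermComplex_d_one_zero :
    (twoTermComplex f).d 1 0 = (twoTermXOneIso f).hom ≫ f ≫ (twoTermXZeroIso f).inv :=
  double_d f _ one_ne_zero

lemma isZero_twoTermComplex_X (n : ℕ) : IsZero ((twoTermComplex f).X (n + 2)) :=
  isZero_double_X _ _ _ (by lia) (by lia)

lemma projective_twoTermComplex_X [Projective X₁] [Projective X₀] :
    ∀ n, Projective ((twoTermComplex f).X n)
  | 0 => .of_iso (twoTermXZeroIso f).symm inferInstance
  | 1 => .of_iso (twoTermXOneIso f).symm inferInstance
  | n + 2 => (isZero_twoTermComplex_X f n).projective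

end Complex

variable {C : Type u} [Category.{v} C] [Abelian C]

lemma twoTermComplex_exactAt_succ {X₁ X₀ : C} (f : X₁ ⟶ X₀) [Mono f] (n : ℕ) :
    (twoTermComplex f).ExactAt (n + 1) := by
  rw [exactAt_iff' _ (n + 2) (n + 1) n (by simp) (by simp)]
  cases n with
  | zero =>
    refine (ShortComplex.exact_iff_mono _ ((isZero_twoTermComplex_X f 0).eq_of_src _ _)).2 ?_
    change Mono ((twoTermComplex f).d 1 0)
    rw [twoTermComplex_d_one_zero]
    infer_instance
  | succ n => exact ShortComplex.exact_of_isZero_X₂ _ (isZero_twoTermComplex_X f n)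

variable (S : ShortComplex C)

/-- The augmentation of the complex `S.X₁ ⟶ S.X₂` given by `S.g : S.X₂ ⟶ S.X₃`. -/
noncomputable def twoTermAugmentation :
    twoTermComplex S.f ⟶ (ChainComplex.single₀ C).obj S.X₃ :=
  (ChainComplex.toSingle₀Equiv _ _).symm
    ⟨(twoTermXZeroIso S.f).hom ≫ S.g, by simp [twoTermComplex_d_one_zero]⟩

variable {S}

lemma quasiIso_twoTermAugmentation (hS : S.ShortExact) : QuasiIso (twoTermAugmentation S) where
  quasiIsoAt
    | 0 => by
      rw [ChainComplex.quasiIsoAt₀_iff, ShortComplex.quasiIso_iff_of_zeros']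
      · refine (ShortComplex.exact_and_epi_g_iff_of_iso ?_).2 ⟨hS.exact, hS.epi_g⟩
        refine ShortComplex.isoMk (twoTermXOneIso S.f) (twoTermXZeroIso S.f) (Iso.refl _) ?_ ?_
        · change _ ≫ S.f = (twoTermComplex S.f).d 1 0 ≫ _
          simp [twoTermComplex_d_one_zero]
        · change _ ≫ S.g = (twoTermAugmentation S).f 0 ≫ 𝟙 _
          simp [twoTermAugmentation]
      · exact double_d_eq_zero₀ S.f (c := .down ℕ) rfl _ _ zero_ne_one
      all_goals rfl
    | n + 1 => by
      have := hS.mono_f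
      rw [quasiIsoAt_iff_exactAt' _ _ (ChainComplex.exactAt_succ_single_obj _ _)]
      exact twoTermComplex_exactAt_succ S.f n

/-- The projective resolution `S.X₁ ⟶ S.X₂` of `S.X₃`, for a short exact sequence `S` whose first
two terms are projective. -/
noncomputable def twoTermResolution (hS : S.ShortExact) [Projective S.X₁] [Projective S.X₂] :
    ProjectiveResolution S.X₃ where
  complex := twoTermComplex S.f
  projective := projective_twoTermComplex_X S.f
  π := twoTermAugmentation S
  quasiIso := quasiIso_twoTermAugmentation hS

variable (R : Type w) [Ring R] [Linear R C] [EnoughProjectives C]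

theorem nonempty_extOne_linearEquiv_quotient (hS : S.ShortExact) [Projective S.X₁]
    [Projective S.X₂] (Y : C) :
    Nonempty (((Ext R C 1).obj (Opposite.op S.X₃)).obj Y ≃ₗ[R]
      (S.X₁ ⟶ Y) ⧸ LinearMap.range (Linear.leftComp R Y S.f)) := by
  let P := twoTermResolution hS
  let K := P.complex.linearYonedaObj R Y
  let T : ShortComplex (ModuleCat R) := ShortComplex.mk
    (ModuleCat.ofHom (Linear.leftComp R Y S.f)) (0 : _ ⟶ K.X 2) (by simp)
  let e : K.sc' 0 1 2 ≅ T := ShortComplex.isoMk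
    (((linearYoneda R C).obj Y).mapIso (twoTermXZeroIso S.f).op.symm)
    (((linearYoneda R C).obj Y).mapIso (twoTermXOneIso S.f).op.symm) (Iso.refl _)
    (by
      ext (v : (twoTermComplex S.f).X 0 ⟶ Y)
      change S.f ≫ (twoTermXZeroIso S.f).inv ≫ v =
        (twoTermXOneIso S.f).inv ≫ (twoTermComplex S.f).d 1 0 ≫ v
      simp [twoTermComplex_d_one_zero])
    (by
      ext (u : _ ⟶ _)
      exact (isZero_twoTermComplex_X S.f 0).eq_of_src _ _)
  let d := ShortComplex.LeftHomologyData.ofIsColimitCokernelCofork T rfl _ (cokernelIsCokernel T.f)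
  exact ⟨(P.isoExt 1 Y ≪≫ ShortComplex.homologyMapIso (K.isoSc' 0 1 2 (by simp) (by simp) ≪≫ e) ≪≫
    d.homologyIso ≪≫ ModuleCat.cokernelIsoRangeQuotient _).toLinearEquiv⟩

end TwoTermResolution

section Telescope

open Finset

variable {R : Type*} [CommRing R] (r : R)

/-- The map `a ↦ (r aₙ₊₁ - aₙ)ₙ` on sequences in `M`. It is what multiplication by `r X - 1` on
`R[X]` induces on linear maps `R[X] → M`, recorded by their values on the monomials `Xⁿ`. -/
def telescopeMap (M : Type*) [AddCommGroup M] [Module R M] : (ℕ → M) →ₗ[R] (ℕ → M) :=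
  r • LinearMap.funLeft R M Nat.succ - LinearMap.id

variable {M N Q : Type*} [AddCommGroup M] [Module R M] [AddCommGroup N] [Module R N]
  [AddCommGroup Q] [Module R Q]

lemma telescopeMap_apply (a : ℕ → M) (n : ℕ) : telescopeMap r M a n = r • a (n + 1) - a n :=
  rfl

lemma telescopeMap_comp (f : M →ₗ[R] N) (a : ℕ → M) :
    telescopeMap r N (f ∘ a) = f ∘ telescopeMap r M a := by
  ext n
  simp [telescopeMap_apply]

variable {r}

lemma telescopeMap_injective_of_injective {f : M →ₗ[R] N} (hf : Function.Injective f)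
    (hN : Function.Injective (telescopeMap r N)) : Function.Injective (telescopeMap r M) :=
  fun a b hab => hf.comp_left (hN (by rw [telescopeMap_comp, telescopeMap_comp, hab]))

lemma pow_smul_eq_of_telescopeMap_eq_zero {a : ℕ → M} (ha : telescopeMap r M a = 0) (n k : ℕ) :
    r ^ k • a (n + k) = a n := by
  induction k with
  | zero => simp
  | succ k ih =>
    have hstep : r • a (n + k + 1) = a (n + k) := sub_eq_zero.1 (congrFun ha (n + k))
    rw [pow_succ, mul_smul, ← add_assoc, hstep, ih]

lemma smodEq_span_pow_iff {x y : M} {k : ℕ} :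
    x ≡ y [SMOD (Ideal.span {r} ^ k • ⊤ : Submodule R M)] ↔ ∃ z : M, x - y = r ^ k • z := by
  rw [SModEq.sub_mem, Ideal.span_singleton_pow, Submodule.ideal_span_singleton_smul]
  simp [Submodule.mem_smul_pointwise_iff_exists, eq_comm]

lemma telescopeMap_injective_of_isHausdorff [IsHausdorff (Ideal.span {r}) M] :
    Function.Injective (telescopeMap r M) := by
  refine (injective_iff_map_eq_zero _).2 fun a ha => funext fun n => ?_
  refine (IsHausdorff.eq_iff_smodEq (I := Ideal.span {r})).2 fun k => smodEq_span_pow_iff.2 ?_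
  exact ⟨a (n + k), by simp [pow_smul_eq_of_telescopeMap_eq_zero ha]⟩

variable (r) in
lemma exists_forall_sum_range_sub_eq_pow_smul [IsPrecomplete (Ideal.span {r}) M] (b : ℕ → M) :
    ∃ x, ∀ k, ∃ z : M, ∑ j ∈ range k, r ^ j • b j - x = r ^ k • z := by
  simp_rw [← smodEq_span_pow_iff]
  refine IsPrecomplete.prec ‹_› fun {m n} hmn => smodEq_span_pow_iff.2 ?_
  obtain ⟨d, rfl⟩ := Nat.exists_eq_add_of_le hmn
  refine ⟨-∑ j ∈ range d, r ^ j • b (m + j), ?_⟩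
  simp only [sum_range_add, pow_add, mul_smul, ← smul_sum, smul_neg]
  abel

lemma telescopeMap_surjective_of_isAdicComplete [IsAdicComplete (Ideal.span {r}) M] :
    Function.Surjective (telescopeMap r M) := by
  intro b
  choose x hx using fun n => exists_forall_sum_range_sub_eq_pow_smul r fun j => b (n + j)
  have hrec (n : ℕ) : x n = b n + r • x (n + 1) := by
    refine (IsHausdorff.eq_iff_smodEq (I := Ideal.span {r})).2 fun k => smodEq_span_pow_iff.2 ?_
    obtain ⟨z, hz⟩ := hx n (k + 1)
    obtain ⟨w, hw⟩ := hx (n + 1) k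
    have hsum : ∑ j ∈ range (k + 1), r ^ j • b (n + j) =
        b n + r • ∑ j ∈ range k, r ^ j • b (n + 1 + j) := by
      simp only [sum_range_succ', smul_sum, smul_smul, ← pow_succ', pow_zero, one_smul, add_zero,
        add_comm, add_left_comm]
    refine ⟨r • (w - z), ?_⟩
    linear_combination (norm := module) hsum - hz + r • hw
  exact ⟨-x, funext fun n => by simp [telescopeMap_apply, hrec n]⟩

theorem telescopeMap_bijective [IsAdicComplete (Ideal.span {r}) M] :
    Function.Bijective (telescopeMap r M) :=
  ⟨telescopeMap_injective_of_isHausdorff, telescopeMap_surjective_of_isAdicComplete⟩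

section Quotient

variable {i : M →ₗ[R] N} {π : N →ₗ[R] Q}

lemma smul_map_succ_eq_of_telescopeMap_eq_comp (hexact : Function.Exact i π) {x : ℕ → N}
    {b : ℕ → M} (hx : telescopeMap r N x = i ∘ b) (n : ℕ) : r • π (x (n + 1)) = π (x n) := by
  have hn : π (r • x (n + 1) - x n) = 0 := (hexact _).2 ⟨b n, (congrFun hx n).symm⟩
  rwa [map_sub, map_smul, sub_eq_zero] at hn

lemma mem_range_telescopeMap_iff (hi : Function.Injective i) (hexact : Function.Exact i π)
    (hN : Function.Injective (telescopeMap r N)) (hQ : Function.Injective (r • · : Q → Q))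
    {x : ℕ → N} {b : ℕ → M} (hx : telescopeMap r N x = i ∘ b) :
    b ∈ LinearMap.range (telescopeMap r M) ↔ π (x 0) = 0 := by
  constructor
  · rintro ⟨a, rfl⟩
    obtain rfl : x = i ∘ a := hN (by rw [hx, telescopeMap_comp])
    exact hexact.apply_apply_eq_zero (a 0)
  · intro h₀
    have hπx (n : ℕ) : π (x n) = 0 := by
      induction n with
      | zero => exact h₀
      | succ n ih =>
        refine hQ ?_
        simpa [ih] using smul_map_succ_eq_of_telescopeMap_eq_comp hexact hx n
    choose a ha using fun n => (hexact (x n)).1 (hπx n)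
    obtain rfl : i ∘ a = x := funext ha
    exact ⟨a, hi.comp_left ((telescopeMap_comp r i a).symm.trans hx)⟩

lemma exists_telescopeMap_eq_comp (hexact : Function.Exact i π) (hπ : Function.Surjective π)
    (hQ : Function.Surjective (r • · : Q → Q)) (q : Q) :
    ∃ (x : ℕ → N) (b : ℕ → M), telescopeMap r N x = i ∘ b ∧ π (x 0) = q := by
  choose divide hdivide using hQ
  choose x hx using fun n => hπ (divide^[n] q)
  have hmem (n : ℕ) : π (telescopeMap r N x n) = 0 := by
    rw [telescopeMap_apply, map_sub, map_smul, hx, hx, Function.iterate_succ_apply', sub_eq_zero]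
    exact hdivide _
  choose b hb using fun n => (hexact _).1 (hmem n)
  exact ⟨x, b, (funext hb).symm, hx 0⟩

theorem nonempty_quotient_range_telescopeMap_linearEquiv (hi : Function.Injective i)
    (hexact : Function.Exact i π) (hπ : Function.Surjective π)
    (hN : Function.Bijective (telescopeMap r N)) (hQ : Function.Bijective (r • · : Q → Q)) :
    Nonempty (((ℕ → M) ⧸ LinearMap.range (telescopeMap r M)) ≃ₗ[R] Q) := by
  let T := LinearEquiv.ofBijective (telescopeMap r N) hN
  let φ : (ℕ → M) →ₗ[R] Q := π ∘ₗ LinearMap.proj 0 ∘ₗ T.symm.toLinearMap ∘ₗ i.compLeft ℕ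
  have hT (b : ℕ → M) : telescopeMap r N (T.symm (i ∘ b)) = i ∘ b := T.apply_symm_apply _
  have hφ : Function.Surjective φ := fun q => by
    obtain ⟨x, b, hxb, rfl⟩ := exists_telescopeMap_eq_comp hexact hπ hQ.2 q
    exact ⟨b, congrArg (fun y => π (y 0)) ((T.symm_apply_eq).2 hxb.symm)⟩
  have hker : LinearMap.range (telescopeMap r M) = LinearMap.ker φ := by
    ext b
    exact mem_range_telescopeMap_iff hi hexact hN.1 hQ.1 (hT b)
  exact ⟨(Submodule.quotEquivOfEq _ _ hker).trans (φ.quotKerEquivOfSurjective hφ)⟩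

end Quotient

end Telescope

section AwayPresentation

open Polynomial

universe u

variable {R : Type u} [CommRing R] (r : R)

lemma C_mul_X_sub_one_mem_nonZeroDivisors : C r * X - 1 ∈ nonZeroDivisors R[X] :=
  mem_nonzeroDivisors_of_coeff_mem 0 (by simpa using isUnit_one.neg.mem_nonZeroDivisors)

section

variable (L : Type u) [CommRing L] [Algebra R L] [IsLocalization.Away r L]

/-- The identification of `R[X] / (r X - 1)` with `R[1/r]`. -/
noncomputable def adjoinRootAlgEquivAway : AdjoinRoot (C r * X - 1) ≃ₐ[R] L :=
  have := IsLocalization.adjoin_inv r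
  IsLocalization.algEquiv (Submonoid.powers r) _ L

/-- The surjection `R[X] → R[1/r]` sending `X` to `1/r`. -/
noncomputable def polynomialToAway : R[X] →ₐ[R] L :=
  (adjoinRootAlgEquivAway r L).toAlgHom.comp (AdjoinRoot.mkₐ (C r * X - 1))

lemma polynomialToAway_surjective : Function.Surjective (polynomialToAway r L) :=
  (adjoinRootAlgEquivAway r L).surjective.comp AdjoinRoot.mk_surjective

lemma polynomialToAway_eq_zero_iff (q : R[X]) : polynomialToAway r L q = 0 ↔ C r * X - 1 ∣ q :=
  (adjoinRootAlgEquivAway r L).map_eq_zero_iff.trans AdjoinRoot.mk_eq_zero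

/-- The sequence `0 → R[X] → R[X] → R[1/r] → 0` whose first map is multiplication by `r X - 1`. -/
noncomputable abbrev awayShortComplex : ShortComplex (ModuleCat R) :=
  ModuleCat.shortComplexOfCompEqZero (LinearMap.mulLeft R (C r * X - 1))
    (polynomialToAway r L).toLinearMap
    (LinearMap.ext fun q => (polynomialToAway_eq_zero_iff r L _).2 (dvd_mul_right _ q))

lemma awayShortComplex_shortExact : (awayShortComplex r L).ShortExact :=
  ModuleCat.shortComplex_shortExact _
    (fun q => (polynomialToAway_eq_zero_iff r L q).trans (exists_congr fun _ => eq_comm))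
    (fun _ _ => (mul_cancel_left_mem_nonZeroDivisors (C_mul_X_sub_one_mem_nonZeroDivisors r)).1)
    (polynomialToAway_surjective r L)

end

variable (M : Type u) [AddCommGroup M] [Module R M]

/-- A linear map `R[X] → M` amounts to the sequence of its values on the monomials `Xⁿ`. -/
noncomputable def polynomialHomEquiv :
    (ModuleCat.of R R[X] ⟶ ModuleCat.of R M) ≃ₗ[R] (ℕ → M) :=
  ModuleCat.homLinearEquiv.trans ((basisMonomials R).constr R).symm

lemma polynomialHomEquiv_apply (v : ModuleCat.of R R[X] ⟶ ModuleCat.of R M) (n : ℕ) :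
    polynomialHomEquiv M v n = v.hom (X ^ n) := by
  rw [X_pow_eq_monomial]
  rfl

lemma polynomialHomEquiv_mulLeft_comp (v : ModuleCat.of R R[X] ⟶ ModuleCat.of R M) :
    polynomialHomEquiv M (ModuleCat.ofHom (LinearMap.mulLeft R (C r * X - 1)) ≫ v) =
      telescopeMap r M (polynomialHomEquiv M v) := by
  ext n
  have hmul : (C r * X - 1) * X ^ n = r • X ^ (n + 1) - X ^ n := by
    rw [smul_eq_C_mul]
    ring
  simp only [telescopeMap_apply, polynomialHomEquiv_apply, ← map_smul, ← map_sub, ← hmul]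
  rfl

theorem nonempty_extOne_away_linearEquiv (L : Type u) [CommRing L] [Algebra R L]
    [IsLocalization.Away r L] :
    Nonempty (((Ext R (ModuleCat R) 1).obj (Opposite.op (ModuleCat.of R L))).obj
      (ModuleCat.of R M) ≃ₗ[R] (ℕ → M) ⧸ LinearMap.range (telescopeMap r M)) := by
  have : Projective (ModuleCat.of R R[X]) := (IsProjective.iff_projective _).1 inferInstance
  obtain ⟨e⟩ := nonempty_extOne_linearEquiv_quotient R (awayShortComplex_shortExact r L)
    (ModuleCat.of R M)
  refine ⟨e.trans (Submodule.Quotient.equiv _ _ (polynomialHomEquiv M) ?_)⟩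
  rw [← LinearMap.range_comp,
    ← LinearMap.range_comp_of_range_eq_top (telescopeMap r M) (polynomialHomEquiv M).range]
  exact congrArg LinearMap.range (LinearMap.ext (polynomialHomEquiv_mulLeft_comp r M))

theorem linearMap_away_eq_zero {R L M : Type*} [CommRing R] {r : R} [CommRing L] [Algebra R L]
    [IsLocalization.Away r L] [AddCommGroup M] [Module R M]
    (hM : Function.Injective (telescopeMap r M)) (f : L →ₗ[R] M) : f = 0 := by
  ext x
  have hker : telescopeMap r M (fun n => f (IsLocalization.Away.invSelf r ^ n * x)) = 0 := by
    ext n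
    rw [telescopeMap_apply, ← map_smul, ← map_sub, Algebra.smul_def, pow_succ', mul_assoc,
      ← mul_assoc, IsLocalization.Away.mul_invSelf, one_mul, sub_self, map_zero, Pi.zero_apply]
  simpa using congrFun ((map_eq_zero_iff _ hM).1 hker) 0

end AwayPresentation

section PadicIntegers

variable (p : ℕ) [Fact p.Prime]

instance isAdicComplete_span_padicInt : IsAdicComplete (Ideal.span {(p : ℤ)}) ℤ_[p] := by
  rw [← IsAdicComplete.map_algebraMap_iff (S := ℤ_[p]), Ideal.map_span, Set.image_singleton,
    map_natCast, ← PadicInt.maximalIdeal_eq_span_p]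
  infer_instance

variable {p}

lemma dvd_int_of_natCast_mul_eq {z : ℤ_[p]} {m : ℤ} (h : (p : ℤ_[p]) * z = m) :
    (p : ℤ) ∣ m := by
  rw [← PadicInt.norm_int_lt_one_iff_dvd, PadicInt.norm_lt_one_iff_dvd]
  exact ⟨z, h.symm⟩

lemma zsmul_injective_padicInt_quotient_int :
    Function.Injective ((p : ℤ) • · : ℤ_[p] ⧸ AddSubgroup.zmultiples (1 : ℤ_[p]) → _) := by
  refine (injective_iff_map_eq_zero (zsmulAddGroupHom (p : ℤ) :
    (ℤ_[p] ⧸ AddSubgroup.zmultiples (1 : ℤ_[p])) →+ _)).2 fun q hq => ?_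
  obtain ⟨z, rfl⟩ := QuotientAddGroup.mk_surjective q
  obtain ⟨m, hm⟩ := (QuotientAddGroup.eq_zero_iff ((p : ℤ) • z)).1 hq
  have hpz : (p : ℤ_[p]) * z = m := by simpa using hm.symm
  obtain ⟨k, rfl⟩ := dvd_int_of_natCast_mul_eq hpz
  have hzk : z = k := mul_left_cancel₀ PadicInt.prime_p.ne_zero (by simpa using hpz)
  exact (QuotientAddGroup.eq_zero_iff z).2 ⟨k, by simp [hzk]⟩

lemma zsmul_surjective_padicInt_quotient_int :
    Function.Surjective ((p : ℤ) • · : ℤ_[p] ⧸ AddSubgroup.zmultiples (1 : ℤ_[p]) → _) := by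
  intro q
  obtain ⟨x, rfl⟩ := QuotientAddGroup.mk_surjective q
  obtain ⟨z, hz⟩ := Ideal.mem_span_singleton.1
    (PadicInt.maximalIdeal_eq_span_p (p := p) ▸ PadicInt.sub_zmodRepr_mem x)
  refine ⟨z, QuotientAddGroup.eq.2 ⟨x.zmodRepr, ?_⟩⟩
  simp only [zsmul_eq_mul, mul_one, Int.cast_natCast]
  linear_combination -hz

lemma exact_int_padicInt_quotient :
    Function.Exact (Algebra.linearMap ℤ ℤ_[p])
      (QuotientAddGroup.mk' (AddSubgroup.zmultiples (1 : ℤ_[p]))).toIntLinearMap := by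
  intro x
  refine (QuotientAddGroup.eq_zero_iff x).trans ?_
  simp [AddSubgroup.mem_zmultiples_iff]

end PadicIntegers

section IntInstances

-- The canonical `ℤ`-linear structures on additive groups agree only propositionally with the ones
-- that `Localization` and `ModuleCat` carry over a general base ring.

instance subsingleton_linear_int (C : Type*) [Category C] [Preadditive C] :
    Subsingleton (Linear ℤ C) where
  allEq
    | ⟨a, _, _⟩, ⟨b, _, _⟩ => by
      obtain rfl : a = b := funext fun X => funext fun Y => Subsingleton.elim _ _
      rfl

lemma isLocalizationAway_toIntAlgebra (m : ℤ) (S : Type*) [CommRing S] [Algebra ℤ S]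
    [h : IsLocalization.Away m S] : @IsLocalization.Away ℤ _ m S _ (Ring.toIntAlgebra S) := by
  convert h
  exact Subsingleton.elim _ _

end IntInstances

universe u

theorem stmt_4_general {R : Type u} [CommRing R] (r : R) (L : Type u) [CommRing L] [Algebra R L]
    [IsLocalization.Away r L] {M : Type u} {N Q : Type*} [AddCommGroup M] [Module R M]
    [AddCommGroup N] [Module R N] [IsAdicComplete (Ideal.span {r}) N] [AddCommGroup Q] [Module R Q]
    {i : M →ₗ[R] N} {π : N →ₗ[R] Q} (hi : Function.Injective i) (hexact : Function.Exact i π)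
    (hπ : Function.Surjective π) (hQ : Function.Bijective (r • · : Q → Q)) :
    Nonempty (((Ext R (ModuleCat R) 1).obj (Opposite.op (ModuleCat.of R L))).obj
      (ModuleCat.of R M) ≃ₗ[R] Q) ∧ ∀ f : L →ₗ[R] M, f = 0 := by
  have hN : Function.Bijective (telescopeMap r N) := telescopeMap_bijective
  obtain ⟨e⟩ := nonempty_extOne_away_linearEquiv r M L
  obtain ⟨e'⟩ := nonempty_quotient_range_telescopeMap_linearEquiv hi hexact hπ hN hQ
  exact ⟨⟨e.trans e'⟩, linearMap_away_eq_zero (telescopeMap_injective_of_injective hi hN.1)⟩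

/-- `Ext¹_ℤ(ℤ[1/p], ℤ) ≅ ℤ_p / ℤ` as abelian groups, and `Hom_ℤ(ℤ[1/p], ℤ) = 0`,
where `ℤ[1/p] = Localization.Away (p : ℤ)` and `ℤ` sits in `ℤ_p` as the multiples
of `1`. -/
theorem stmt_4 (p : ℕ) [Fact p.Prime] :
    Nonempty
      ((((Ext ℤ (ModuleCat ℤ) 1).obj
          (Opposite.op (ModuleCat.of ℤ (Localization.Away (p : ℤ))))).obj
            (ModuleCat.of ℤ ℤ)) ≃+
        (ℤ_[p] ⧸ AddSubgroup.zmultiples (1 : ℤ_[p]))) ∧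
    ∀ f : (Localization.Away (p : ℤ)) →+ ℤ, f = 0 := by
  have := isLocalizationAway_toIntAlgebra (p : ℤ) (Localization.Away (p : ℤ))
  let : Algebra ℤ (Localization.Away (p : ℤ)) := Ring.toIntAlgebra _
  obtain ⟨⟨e⟩, hzero⟩ := stmt_4_general (p : ℤ) (Localization.Away (p : ℤ)) Int.cast_injective
    exact_int_padicInt_quotient (QuotientAddGroup.mk'_surjective _)
    ⟨zsmul_injective_padicInt_quotient_int, zsmul_surjective_padicInt_quotient_int⟩
  rw [Subsingleton.elim Linear.preadditiveIntLinear ModuleCat.instLinear]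
  exact ⟨⟨e.toAddEquiv⟩, fun f => AddMonoidHom.ext (LinearMap.congr_fun (hzero f.toIntLinearMap))⟩
end

section
/- Every p-torsion abelian group A with {a ∈ A : p·a = 0} finite decomposes as A ≅ D ⊕ F where D is a divisible group (a finite direct sum of Prüfer p-groups) and F is a finite p-group. -/
/-- The Prüfer `p`-group, realized as the `p`-primary torsion subgroup of `ℚ/ℤ`. -/
noncomputable def Prufer (p : ℕ) [Fact p.Prime] : AddSubgroup (ℚ ⧸ AddSubgroup.zmultiples (1 : ℚ)) :=
  AddCommGroup.primaryComponent _ p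

/-!
If the socle `A[p]` is finite, some `N` bounds the finite `p`-heights of its elements, so every
`x ∈ A[p]` lying in `D = p ^ N • A` has infinite height in `D`. This forces `D` to be `p`-divisible,
hence an injective `ℤ`-module and a direct summand; its complement is killed by `p ^ N` and has
finite socle, so it is finite. A `p`-divisible `p`-torsion group is determined by its socle, and
`D[p] ≅ (ZMod p) ^ r` is the socle of `r` copies of the Prüfer group.
-/

open scoped AddSubgroup

section Torsion

variable {n : ℕ} {A B : Type*} [AddCommGroup A] [AddCommGroup B]

theorem finite_torsionBy_of_injective [Finite A[n]] {f : B →+ A} (hf : Function.Injective f) :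
    Finite B[n] := by
  have hmem (b : B[n]) : f b ∈ A[n] := by
    rw [AddSubgroup.torsionBy.nsmul_iff, ← map_nsmul, AddSubgroup.torsionBy.nsmul_iff.1 b.2,
      map_zero]
  exact Finite.of_injective (fun b ↦ (⟨f b, hmem b⟩ : A[n])) fun b c h ↦
    Subtype.ext (hf (Subtype.ext_iff.1 h))

theorem finite_of_pow_nsmul_eq_zero {N : ℕ} [Finite A[n]] (hN : ∀ a : A, n ^ N • a = 0) :
    Finite A := by
  induction N generalizing A with
  | zero =>
    have : Subsingleton A := subsingleton_of_forall_eq 0 fun a ↦ by simpa using hN a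
    infer_instance
  | succ N ih =>
    let f := nsmulAddMonoidHom (α := A) n
    have : Finite f.ker := by
      have : f.ker = A[n] := AddSubgroup.ext fun a ↦ AddSubgroup.torsionBy.nsmul_iff.symm
      rwa [this]
    have : Finite f.range[n] := finite_torsionBy_of_injective f.range.subtype_injective
    have : Finite f.range := by
      refine ih ?_
      rintro ⟨_, a, rfl⟩
      exact Subtype.ext (by simpa [f, pow_succ, mul_smul] using hN a)
    have : Finite (A ⧸ f.ker) :=
      .of_equiv _ (QuotientAddGroup.quotientKerEquivRange f).symm.toEquiv
    exact .of_addSubgroup_quotient f.ker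

/-- The `n`-torsion of a power of `A` is that power of `A[n]`; this computes the socle of a finite
direct sum of Prüfer groups. -/
def torsionByPiEquiv (ι : Type*) (n : ℕ) (A : Type*) [AddCommGroup A] :
    (ι → A)[n] ≃+ (ι → A[n]) where
  toFun x i := ⟨x.1 i, AddSubgroup.torsionBy.nsmul_iff.2
    (congrFun (AddSubgroup.torsionBy.nsmul_iff.1 x.2) i)⟩
  invFun y := ⟨fun i ↦ y i, AddSubgroup.torsionBy.nsmul_iff.2
    (funext fun i ↦ AddSubgroup.torsionBy.nsmul_iff.1 (y i).2)⟩
  map_add' _ _ := rfl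

theorem exists_pow_nsmul_eq_zero_pi {ι : Type*} [Finite ι] {G : ι → Type*}
    [∀ i, AddCommGroup (G i)] (htor : ∀ (i : ι) (a : G i), ∃ k : ℕ, n ^ k • a = 0) (x : ∀ i, G i) :
    ∃ k : ℕ, n ^ k • x = 0 := by
  have := Fintype.ofFinite ι
  choose k hk using fun i ↦ htor i (x i)
  refine ⟨∑ i, k i, funext fun i ↦ ?_⟩
  obtain ⟨c, hc⟩ : n ^ k i ∣ n ^ ∑ i, k i :=
    pow_dvd_pow n (Finset.single_le_sum_of_canonicallyOrdered (Finset.mem_univ i))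
  rw [Pi.smul_apply, hc, mul_comm, mul_smul, hk, smul_zero, Pi.zero_apply]

theorem exists_addEquiv_torsionBy_pi_zmod (p : ℕ) [Fact p.Prime] [Finite A[p]] :
    ∃ r : ℕ, Nonempty (A[p] ≃+ (Fin r → ZMod p)) := by
  let := AddSubgroup.torsionBy.zmodModule (A := A) (n := p)
  exact ⟨_, ⟨(Module.finBasis (ZMod p) A[p]).equivFun.toAddEquiv⟩⟩

end Torsion

section Divisible

variable {p : ℕ} {A B : Type*} [AddCommGroup A] [AddCommGroup B]

theorem exists_forall_mem_range_pow_nsmul_of_finite {S : Set A} (hS : S.Finite) :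
    ∃ N : ℕ, ∀ x ∈ S, x ∈ (nsmulAddMonoidHom (α := A) (p ^ N)).range →
      ∀ n : ℕ, x ∈ (nsmulAddMonoidHom (α := A) (p ^ n)).range := by
  have hanti : Antitone fun n ↦ (nsmulAddMonoidHom (α := A) (p ^ n)).range := by
    rintro m n hmn _ ⟨b, rfl⟩
    exact ⟨p ^ (n - m) • b, by simp [← mul_smul, ← pow_add, Nat.add_sub_cancel' hmn]⟩
  have hbound (x : A) : ∃ N : ℕ, x ∈ (nsmulAddMonoidHom (α := A) (p ^ N)).range →
      ∀ n : ℕ, x ∈ (nsmulAddMonoidHom (α := A) (p ^ n)).range := by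
    by_contra! h
    obtain ⟨-, n, hn⟩ := h 0
    exact hn (h n).1
  choose f hf using hbound
  obtain ⟨N, hN⟩ := (hS.image f).bddAbove
  exact ⟨N, fun x hx hxN ↦ hf x (hanti (hN (Set.mem_image_of_mem f hx)) hxN)⟩

theorem nsmul_surjective_of_torsionBy_le_range (htor : ∀ a : A, ∃ n : ℕ, p ^ n • a = 0)
    (hle : ∀ n : ℕ, A[p] ≤ (nsmulAddMonoidHom (α := A) (p ^ n)).range) :
    Function.Surjective fun a : A ↦ p • a := by
  intro a
  obtain ⟨n, hn⟩ := htor a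
  induction n generalizing a with
  | zero => exact ⟨0, by simpa using hn.symm⟩
  | succ n ih =>
    have hsocle : p ^ n • a ∈ A[p] := by
      rwa [AddSubgroup.torsionBy.nsmul_iff, ← mul_smul, ← pow_succ']
    obtain ⟨b, hb : p ^ (n + 1) • b = p ^ n • a⟩ := hle (n + 1) hsocle
    obtain ⟨c, hc : p • c = a - p • b⟩ := ih (a - p • b) (by
      rw [nsmul_sub, ← mul_smul, ← pow_succ, hb, sub_self])
    exact ⟨b + c, by simp [smul_add, hc]⟩

theorem exists_nsmul_surjective_range_pow (htor : ∀ a : A, ∃ n : ℕ, p ^ n • a = 0)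
    [hfin : Finite A[p]] :
    ∃ N : ℕ, Function.Surjective
      fun d : (nsmulAddMonoidHom (α := A) (p ^ N)).range ↦ p • d := by
  obtain ⟨N, hN⟩ := exists_forall_mem_range_pow_nsmul_of_finite (p := p) (S := (A[p] : Set A)) hfin
  refine ⟨N, nsmul_surjective_of_torsionBy_le_range
    (fun d ↦ (htor d).imp fun _ h ↦ Subtype.ext h) fun n d hd ↦ ?_⟩
  have hdA : (d : A) ∈ A[p] :=
    AddSubgroup.torsionBy.nsmul_iff.2 (congrArg Subtype.val (AddSubgroup.torsionBy.nsmul_iff.1 hd))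
  obtain ⟨c, hc⟩ := hN d hdA d.2 (n + N)
  exact ⟨⟨p ^ N • c, c, rfl⟩, Subtype.ext (by simpa [← mul_smul, ← pow_add] using hc)⟩

theorem nsmul_surjective_of_coprime {m : ℕ} (hm : m.Coprime p)
    (htor : ∀ a : A, ∃ n : ℕ, p ^ n • a = 0) : Function.Surjective fun a : A ↦ m • a := by
  intro a
  obtain ⟨n, hn⟩ := htor a
  obtain ⟨l, hl⟩ := exists_nsmul_eq_self_of_coprime
    ((hm.pow_right n).coprime_dvd_right (addOrderOf_dvd_of_nsmul_eq_zero hn))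
  exact ⟨l • a, (smul_comm m l a).trans hl⟩

theorem baer_of_nsmul_surjective [hp : Fact p.Prime] (htor : ∀ a : A, ∃ n : ℕ, p ^ n • a = 0)
    (hdiv : Function.Surjective fun a : A ↦ p • a) : Module.Baer ℤ A := by
  have hsurj {n : ℕ} (hn : n ≠ 0) : Function.Surjective fun a : A ↦ n • a := by
    obtain ⟨k, m, hpm, rfl⟩ := Nat.exists_eq_pow_mul_and_not_dvd hn p hp.out.ne_one
    have hpow : Function.Surjective fun a : A ↦ p ^ k • a := by
      rw [← smul_iterate]
      exact hdiv.iterate k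
    simp only [mul_smul]
    exact hpow.comp
      (nsmul_surjective_of_coprime ((hp.out.coprime_iff_not_dvd.2 hpm).symm) htor)
  let := divisibleByOfSMulRightSurj A ℕ hsurj
  let := AddGroup.divisibleByIntOfDivisibleByNat A
  exact Module.Baer.of_divisible A

theorem exists_isCompl_of_baer {R M : Type*} [Ring R] [AddCommGroup M] [Module R M]
    {D : Submodule R M} (hD : Module.Baer R D) : ∃ F : Submodule R M, IsCompl D F := by
  obtain ⟨r, hr⟩ := hD.extension_property D.subtype D.subtype_injective .id
  exact ⟨r.ker, LinearMap.isCompl_of_proj (LinearMap.congr_fun hr)⟩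

theorem exists_isCompl_nsmul_surjective_finite [Fact p.Prime]
    (htor : ∀ a : A, ∃ n : ℕ, p ^ n • a = 0) [Finite A[p]] :
    ∃ D F : Submodule ℤ A, IsCompl D F ∧ (Function.Surjective fun d : D ↦ p • d) ∧ Finite F := by
  obtain ⟨N, hdiv⟩ := exists_nsmul_surjective_range_pow htor
  let D : Submodule ℤ A := (nsmulAddMonoidHom (p ^ N)).range.toIntSubmodule
  have hD : Module.Baer ℤ D :=
    baer_of_nsmul_surjective (p := p) (fun d ↦ (htor d).imp fun _ h ↦ Subtype.ext h) hdiv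
  obtain ⟨F, hDF⟩ := exists_isCompl_of_baer hD
  have hF (x : F) : p ^ N • x = 0 :=
    Subtype.ext (Submodule.disjoint_def.1 hDF.disjoint _ ⟨x, rfl⟩ (p ^ N • x).2)
  have : Finite F[p] := finite_torsionBy_of_injective (f := F.subtype.toAddMonoidHom)
    F.subtype_injective
  exact ⟨D, F, hDF, hdiv, finite_of_pow_nsmul_eq_zero hF⟩

theorem injective_of_disjoint_ker_torsionBy (htor : ∀ a : A, ∃ n : ℕ, p ^ n • a = 0) {f : A →+ B}
    (hf : Disjoint f.ker A[p]) : Function.Injective f := by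
  rw [injective_iff_map_eq_zero]
  intro a ha
  obtain ⟨n, hn⟩ := htor a
  induction n generalizing a with
  | zero => simpa using hn
  | succ n ih =>
    have hpa : p • a = 0 :=
      ih _ (by rw [map_nsmul, ha, smul_zero]) (by rwa [← mul_smul, ← pow_succ])
    exact AddSubgroup.disjoint_def.1 hf ha (AddSubgroup.torsionBy.nsmul_iff.2 hpa)

theorem surjective_of_torsionBy_le_range (hdiv : Function.Surjective fun a : A ↦ p • a)
    (htor : ∀ b : B, ∃ n : ℕ, p ^ n • b = 0) {f : A →+ B} (hf : B[p] ≤ f.range) :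
    Function.Surjective f := by
  intro b
  obtain ⟨n, hn⟩ := htor b
  induction n generalizing b with
  | zero => exact ⟨0, by simpa using hn.symm⟩
  | succ n ih =>
    obtain ⟨a, ha⟩ := ih (p • b) (by rwa [← mul_smul, ← pow_succ])
    obtain ⟨c, rfl : p • c = a⟩ := hdiv a
    have hsocle : b - f c ∈ B[p] := by
      rw [AddSubgroup.torsionBy.nsmul_iff, nsmul_sub, ← map_nsmul, ha, sub_self]
    obtain ⟨d, hd⟩ := hf hsocle
    exact ⟨c + d, by rw [map_add, hd, add_sub_cancel]⟩

theorem nonempty_addEquiv_of_torsionBy_addEquiv [Fact p.Prime]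
    (htorA : ∀ a : A, ∃ n : ℕ, p ^ n • a = 0) (hdivA : Function.Surjective fun a : A ↦ p • a)
    (htorB : ∀ b : B, ∃ n : ℕ, p ^ n • b = 0) (hdivB : Function.Surjective fun b : B ↦ p • b)
    (e : A[p] ≃+ B[p]) : Nonempty (A ≃+ B) := by
  obtain ⟨f, hf⟩ := (baer_of_nsmul_surjective htorB hdivB).extension_property_addMonoidHom
    A[p].subtype A[p].subtype_injective (B[p].subtype.comp e.toAddMonoidHom)
  have hfe (a : A[p]) : f a = e a := DFunLike.congr_fun hf a
  have hinj : Disjoint f.ker A[p] := by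
    refine AddSubgroup.disjoint_def.2 fun {a} ha hpa ↦ ?_
    have : e ⟨a, hpa⟩ = 0 := Subtype.ext ((hfe ⟨a, hpa⟩).symm.trans ha)
    exact congrArg Subtype.val ((map_eq_zero_iff e e.injective).1 this)
  have hsurj : B[p] ≤ f.range := fun b hb ↦
    ⟨e.symm ⟨b, hb⟩, by rw [hfe, e.apply_symm_apply]⟩
  exact ⟨.ofBijective f ⟨injective_of_disjoint_ker_torsionBy htorA hinj,
    surjective_of_torsionBy_le_range hdivA htorB hsurj⟩⟩

end Divisible

namespace Prufer

variable (p : ℕ) [Fact p.Prime]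

theorem exists_pow_nsmul_eq_zero (x : Prufer p) : ∃ n : ℕ, p ^ n • x = 0 :=
  x.2.imp fun _ h ↦ Subtype.ext h

theorem nsmul_surjective : Function.Surjective fun x : Prufer p ↦ p • x := by
  rintro ⟨x, n, hn⟩
  obtain ⟨y, hy⟩ := DivisibleBy.surjective_smul (AddCircle (1 : ℚ)) ℤ
    (Nat.cast_ne_zero.2 (Fact.out : p.Prime).ne_zero) x
  replace hy : p • y = x := by simpa using hy
  exact ⟨⟨y, n + 1, by rw [pow_succ, mul_smul, hy, hn]⟩, Subtype.ext hy⟩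

theorem nonempty_zmod_addEquiv_torsionBy : Nonempty (ZMod p ≃+ (Prufer p)[p]) := by
  have hp : 0 < p := (Fact.out : p.Prime).pos
  have := Fact.mk (zero_lt_one' ℚ)
  have horder : addOrderOf ((1 / p : ℚ) : AddCircle (1 : ℚ)) = p :=
    AddCircle.addOrderOf_period_div hp
  have htor : p • ((1 / p : ℚ) : AddCircle (1 : ℚ)) = 0 := by
    simpa only [horder] using addOrderOf_nsmul_eq_zero ((1 / p : ℚ) : AddCircle (1 : ℚ))
  let g : (Prufer p)[p] := ⟨⟨((1 / p : ℚ) : AddCircle (1 : ℚ)), 1, by rwa [pow_one]⟩,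
    AddSubgroup.torsionBy.nsmul_iff.2 (Subtype.ext htor)⟩
  have hg : addOrderOf g = p := by
    rw [← AddSubgroup.addOrderOf_coe, ← AddSubgroup.addOrderOf_coe]
    exact horder
  have hgen (x : (Prufer p)[p]) : x ∈ AddSubgroup.zmultiples g := by
    have hx : p • (x : AddCircle (1 : ℚ)) = 0 :=
      congrArg Subtype.val (AddSubgroup.torsionBy.nsmul_iff.1 x.2)
    obtain ⟨m, -, hm⟩ := (AddCircle.nsmul_eq_zero_iff hp).1 hx
    refine ⟨m, Subtype.ext (Subtype.ext ?_)⟩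
    rw [← hm, AddCircle.natCast_div_mul_eq_nsmul]
    simp [g]
  have hcard : Nat.card (Prufer p)[p] = p :=
    (addOrderOf_eq_card_of_forall_mem_zmultiples hgen).symm.trans hg
  exact ⟨zmodAddEquivOfGenerator hgen hcard⟩

variable {p} {D : Type*} [AddCommGroup D]

theorem exists_addEquiv_pi (htor : ∀ d : D, ∃ n : ℕ, p ^ n • d = 0)
    (hdiv : Function.Surjective fun d : D ↦ p • d) [Finite D[p]] :
    ∃ r : ℕ, Nonempty (D ≃+ (Fin r → Prufer p)) := by
  obtain ⟨r, ⟨e⟩⟩ := exists_addEquiv_torsionBy_pi_zmod (A := D) p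
  obtain ⟨f⟩ := nonempty_zmod_addEquiv_torsionBy p
  let socleEquiv : D[p] ≃+ (Fin r → Prufer p)[p] :=
    (e.trans (AddEquiv.piCongrRight fun _ ↦ f)).trans (torsionByPiEquiv (Fin r) p (Prufer p)).symm
  exact ⟨r, nonempty_addEquiv_of_torsionBy_addEquiv htor hdiv
    (exists_pow_nsmul_eq_zero_pi fun _ ↦ exists_pow_nsmul_eq_zero p)
    (Function.Surjective.piMap fun _ ↦ nsmul_surjective p) socleEquiv⟩

end Prufer

theorem exists_addEquiv_pi_zmod_pow {p : ℕ} (hp : p.Prime) {F : Type*} [AddCommGroup F] [Finite F]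
    (htor : ∀ a : F, ∃ n : ℕ, p ^ n • a = 0) :
    ∃ (m : ℕ) (k : Fin m → ℕ), (∀ i, 1 ≤ k i) ∧ Nonempty (F ≃+ ∀ i, ZMod (p ^ k i)) := by
  classical
  obtain ⟨ι, _, q, hq, ⟨e⟩⟩ := AddCommGroup.equiv_directSum_zmod_of_finite' F
  replace e : F ≃+ ∀ i, ZMod (q i) := e.trans (DirectSum.addEquivProd _)
  have hqk (i : ι) : ∃ k, 1 ≤ k ∧ q i = p ^ k := by
    obtain ⟨n, hn⟩ := htor (e.symm (Pi.single i 1))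
    rw [← map_nsmul, map_eq_zero_iff _ e.symm.injective] at hn
    have hcast : ((p ^ n : ℕ) : ZMod (q i)) = 0 := by simpa using congrFun hn i
    obtain ⟨k, -, hk⟩ := (Nat.dvd_prime_pow hp).1 ((ZMod.natCast_eq_zero_iff _ _).1 hcast)
    refine ⟨k, Nat.one_le_iff_ne_zero.2 ?_, hk⟩
    rintro rfl
    exact (hq i).ne' hk
  choose k hk hqk using hqk
  obtain rfl : q = fun i ↦ p ^ k i := funext hqk
  let σ := (Fintype.equivFin ι).symm
  exact ⟨Fintype.card ι, k ∘ σ, fun _ ↦ hk _,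
    ⟨e.trans (RingEquiv.piCongrLeft (fun i ↦ ZMod (p ^ k i)) σ).toAddEquiv.symm⟩⟩

theorem stmt_14_general (p : ℕ) [Fact p.Prime] (A : Type*) [AddCommGroup A]
    (htor : ∀ a : A, ∃ n : ℕ, (p ^ n : ℕ) • a = 0)
    (hfin : Finite {a : A // (p : ℕ) • a = 0}) :
    ∃ (r m : ℕ) (k : Fin m → ℕ), (∀ i, 1 ≤ k i) ∧
      Nonempty (A ≃+ ((Fin r → Prufer p) × ∀ i : Fin m, ZMod (p ^ k i))) := by
  have : Finite A[p] :=
    .of_equiv _ (Equiv.subtypeEquivRight fun _ ↦ AddSubgroup.torsionBy.nsmul_iff.symm)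
  obtain ⟨D, F, hDF, hdiv, _⟩ := exists_isCompl_nsmul_surjective_finite htor
  have : Finite D[p] :=
    finite_torsionBy_of_injective (f := D.subtype.toAddMonoidHom) D.subtype_injective
  have htor_sub (B : Submodule ℤ A) (b : B) : ∃ n : ℕ, p ^ n • b = 0 :=
    (htor b).imp fun _ h ↦ Subtype.ext h
  obtain ⟨r, ⟨eD⟩⟩ := Prufer.exists_addEquiv_pi (htor_sub D) hdiv
  obtain ⟨m, k, hk, ⟨eF⟩⟩ := exists_addEquiv_pi_zmod_pow Fact.out (htor_sub F)
  exact ⟨r, m, k, hk,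
    ⟨(Submodule.prodEquivOfIsCompl D F hDF).symm.toAddEquiv.trans (eD.prodCongr eF)⟩⟩

/-- Every p-torsion abelian group `A` with `{a | p • a = 0}` finite decomposes as
`A ≅ D ⊕ F` where `D` is a finite direct sum of Prüfer p-groups (a divisible group)
and `F` is a finite p-group (a finite direct sum of cyclic p-groups). -/
theorem stmt_14 (p : ℕ) [Fact p.Prime] (A : Type) [AddCommGroup A]
    (htor : ∀ a : A, ∃ n : ℕ, (p ^ n : ℕ) • a = 0)
    (hfin : Finite {a : A // (p : ℕ) • a = 0}) :
    ∃ (r m : ℕ) (k : Fin m → ℕ), (∀ i, 1 ≤ k i) ∧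
      Nonempty (A ≃+ ((Fin r → Prufer p) × ∀ i : Fin m, ZMod (p ^ k i))) :=
  stmt_14_general p A htor hfin
end
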